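/- Let λ ≥ 2 and let ⟨g_i⟩ be a geodesic ray in F₂ which is a λ-shrinking sequence of some direction in S¹. Then the set of directions θ ∈ S¹ of which ⟨g_i⟩ is a λ-shrinking sequence is exactly a pair of antipodal vectors {θ, −θ}. -/

import Mathlib

noncomputable section

abbrev F2 := FreeGroup Bool

def gh : F2 := FreeGroup.of true
def gv : F2 := FreeGroup.of false

def hmat (l : ℝ) : Matrix.SpecialLinearGroup (Fin 2) ℝ :=
  ⟨!![1, l; 0, 1], by norm_num [Matrix.det_fin_two_of]⟩

def vmat (l : ℝ) : Matrix.SpecialLinearGroup (Fin 2) ℝ :=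
  ⟨!![1, 0; l, 1], by norm_num [Matrix.det_fin_two_of]⟩

def rho (l : ℝ) : F2 →* Matrix.SpecialLinearGroup (Fin 2) ℝ :=
  FreeGroup.lift fun b => if b then hmat l else vmat l

def act (l : ℝ) (g : F2) (x : Fin 2 → ℝ) : Fin 2 → ℝ :=
  (rho l g).val.mulVec x

def nrm (x : Fin 2 → ℝ) : ℝ := Real.sqrt (x 0 ^ 2 + x 1 ^ 2)

def Circ : Set (Fin 2 → ℝ) := {x | nrm x = 1}

def gens : Set F2 := {gh, gv, gh⁻¹, gv⁻¹}

def ShrinkSet (l : ℝ) (g : F2) : Set (Fin 2 → ℝ) :=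
  {x | x ∈ Circ ∧ nrm (act l g x) < 1}

def ExpSet (l : ℝ) (g : F2) : Set (Fin 2 → ℝ) :=
  {x | x ∈ Circ ∧ 1 < nrm (act l g x)}

def IsGeodesicRay (g : ℕ → F2) : Prop :=
  g 0 = 1 ∧ (∀ n, g (n + 1) * (g n)⁻¹ ∈ gens) ∧ ∀ n, g (n + 2) * (g n)⁻¹ ≠ 1

def IsGeodesicSegment (g : ℕ → F2) (N : ℕ) : Prop :=
  g 0 = 1 ∧ (∀ n, n + 1 ≤ N → g (n + 1) * (g n)⁻¹ ∈ gens) ∧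
    ∀ n, n + 2 ≤ N → g (n + 2) * (g n)⁻¹ ≠ 1

def IsShrinkingSeq (l : ℝ) (g : ℕ → F2) (θ : Fin 2 → ℝ) : Prop :=
  ∀ ε : ℝ, 0 < ε → ∃ i : ℕ, nrm (act l (g i) θ) < ε

def Shrinkable (l : ℝ) (θ : Fin 2 → ℝ) : Prop :=
  ∀ ε : ℝ, 0 < ε → ∃ g : F2, nrm (act l g θ) < ε

def Renormalizable (l : ℝ) (θ : Fin 2 → ℝ) : Prop :=
  Shrinkable l θ ∧ ∀ k : F2, ∀ c : ℝ, act l (k * (gh * gv⁻¹) * k⁻¹) θ ≠ c • θ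

abbrev SP := Bool × Bool

def Quad (s : SP) : Set (Fin 2 → ℝ) :=
  {x | (if s.1 then 0 < x 0 else x 0 < 0) ∧ (if s.2 then 0 < x 1 else x 1 < 0)}

def letterSigma : Bool × Bool → SP → SP
  | (true, true), s => (s.2, s.2)
  | (false, true), s => (s.1, s.1)
  | (true, false), s => (!s.2, s.2)
  | (false, false), s => (s.1, !s.1)

def SigmaAct (g : F2) : SP → SP :=
  (FreeGroup.toWord g).foldr (fun w acc => letterSigma w ∘ acc) id

def gammaAut : F2 →* F2 := FreeGroup.lift fun b => if b then gv⁻¹ else gh⁻¹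

def rPerm (s : SP) : SP := (!s.2, s.1)

def rPermInv (s : SP) : SP := (s.2, !s.1)

def shiftRay (g : ℕ → F2) : ℕ → F2 := fun n => g (n + 1) * (g 1)⁻¹

def TailEquiv (g g' : ℕ → F2) : Prop :=
  ∃ m n : ℕ, shiftRay^[m] g = shiftRay^[n] g'

def seqPow (a : F2) : ℕ → F2 := fun n => a ^ n

def seqPer (a b : F2) : ℕ → F2 := fun n =>
  if n % 2 = 0 then (b * a) ^ (n / 2) else a * (b * a) ^ (n / 2)

def Cond1 (g : ℕ → F2) : Prop :=
  ¬ TailEquiv g (seqPow gh) ∧ ¬ TailEquiv g (seqPow gh⁻¹) ∧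
    ¬ TailEquiv g (seqPow gv) ∧ ¬ TailEquiv g (seqPow gv⁻¹)

def Cond2 (g : ℕ → F2) : Prop :=
  ¬ TailEquiv g (seqPer gh gv⁻¹) ∧ ¬ TailEquiv g (seqPer gh⁻¹ gv)

def adjSum {V : Type} (G : SimpleGraph V) (f : V → ℝ) (v : V) : ℝ :=
  ∑ᶠ w ∈ G.neighborSet v, f w

def BoundedValance {V : Type} (G : SimpleGraph V) : Prop :=
  ∃ D : ℕ, ∀ v, (G.neighborSet v).Finite ∧ (G.neighborSet v).ncard ≤ D

def BipartWith {V : Type} (G : SimpleGraph V) (A : Set V) : Prop :=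
  ∀ v w, G.Adj v w → (v ∈ A ↔ w ∉ A)

def Hop {V : Type} (G : SimpleGraph V) (A : Set V) (k : ℤ) (f : V → ℝ) : V → ℝ :=
  fun v => f v + (k : ℝ) * Set.indicator A (adjSum G f) v

def Vop {V : Type} (G : SimpleGraph V) (A : Set V) (k : ℤ) (f : V → ℝ) : V → ℝ :=
  fun v => f v + (k : ℝ) * Set.indicator Aᶜ (adjSum G f) v

def QuadV {V : Type} (A : Set V) (s : SP) : Set (V → ℝ) :=
  {f | (∀ v ∈ A, f v = 0 ∨ (if s.1 then 0 < f v else f v < 0)) ∧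
       ∀ v, v ∉ A → f v = 0 ∨ (if s.2 then 0 < f v else f v < 0)}

def valance {V : Type} (G : SimpleGraph V) (v : V) : ℕ := (G.neighborSet v).ncard

def evec {V : Type} (v : V) : V → ℝ := Set.indicator {v} 1

def InSpoke {V : Type} (G : SimpleGraph V) (x : V) : Prop :=
  ∃ k : ℕ, 2 ≤ k ∧ ∃ c : ℕ → V,
    (∀ i j, 1 ≤ i → i ≤ k → 1 ≤ j → j ≤ k → c i = c j → i = j) ∧
    valance G (c 1) = 1 ∧
    (∀ i, 2 ≤ i → i ≤ k - 1 →
      valance G (c i) = 2 ∧ G.Adj (c i) (c (i - 1)) ∧ G.Adj (c i) (c (i + 1))) ∧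
    ∃ i, 1 ≤ i ∧ i ≤ k ∧ x = c i

def nsq (x : Fin 2 → ℝ) : ℝ := x 0 ^ 2 + x 1 ^ 2

lemma act_mul (l : ℝ) (a b : F2) (x : Fin 2 → ℝ) : act l (a * b) x = act l a (act l b x) := by
  simp only [act, map_mul, Matrix.SpecialLinearGroup.coe_mul, Matrix.mulVec_mulVec]

lemma act_one' (l : ℝ) (x : Fin 2 → ℝ) : act l 1 x = x := by
  simp [act]

lemma act_neg (l : ℝ) (a : F2) (x : Fin 2 → ℝ) : act l a (-x) = - act l a x := by
  simp [act, Matrix.mulVec_neg]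

lemma act_gh (l : ℝ) (x : Fin 2 → ℝ) : act l gh x = ![x 0 + l * x 1, x 1] := by
  ext i; fin_cases i <;> simp [act, gh, rho, hmat, Matrix.mulVec, dotProduct, Fin.sum_univ_two]

lemma act_gv (l : ℝ) (x : Fin 2 → ℝ) : act l gv x = ![x 0, x 1 + l * x 0] := by
  ext i; fin_cases i <;>
    simp [act, gv, rho, vmat, Matrix.mulVec, dotProduct, Fin.sum_univ_two, add_comm]

lemma act_ghi (l : ℝ) (x : Fin 2 → ℝ) : act l gh⁻¹ x = ![x 0 - l * x 1, x 1] := by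
  have h : act l gh ![x 0 - l * x 1, x 1] = x := by
    rw [act_gh]; ext i; fin_cases i <;> simp
  conv_lhs => rw [← h, ← act_mul, inv_mul_cancel, act_one']

lemma act_gvi (l : ℝ) (x : Fin 2 → ℝ) : act l gv⁻¹ x = ![x 0, x 1 - l * x 0] := by
  have h : act l gv ![x 0, x 1 - l * x 0] = x := by
    rw [act_gv]; ext i; fin_cases i <;> simp
  conv_lhs => rw [← h, ← act_mul, inv_mul_cancel, act_one']

lemma key1 (l p q : ℝ) (hl : 2 ≤ l) (h : p ^ 2 + q ^ 2 < (p + l * q) ^ 2 + q ^ 2) :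
    (p + l * q) ^ 2 + q ^ 2 < (p + l * q + l * q) ^ 2 + q ^ 2 ∧
    (p + l * q) ^ 2 + q ^ 2 < (p + l * q) ^ 2 + (q + l * (p + l * q)) ^ 2 ∧
    (p + l * q) ^ 2 + q ^ 2 < (p + l * q) ^ 2 + (q - l * (p + l * q)) ^ 2 := by
  obtain ⟨r, rfl⟩ : ∃ r, p = r - l * q := ⟨p + l * q, by ring⟩
  simp only [sub_add_cancel] at h ⊢
  have h0 : 0 < q * (2 * r - l * q) := by
    have : 0 < l * (q * (2 * r - l * q)) := by nlinarith
    exact (pos_iff_pos_of_mul_pos this).1 (by linarith)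
  have hq : 0 < q ^ 2 := by
    have : q ≠ 0 := by rintro rfl; simp at h0
    positivity
  have h1 : 0 < q * r := by nlinarith
  have h2 : q ^ 2 < q * r := by nlinarith
  have h3 : q * r < r ^ 2 := by nlinarith [sq_nonneg (r - q)]
  have h4 : 2 * (q * r) < l * r ^ 2 := by nlinarith
  refine ⟨?_, ?_, ?_⟩ <;> nlinarith [mul_pos (by linarith : 0 < l) h1]

lemma key2 {A B C D E : Prop} (k : A → B ∧ C ∧ D) (ha : A) (f : B → C → D → E) : E :=
  f (k ha).1 (k ha).2.1 (k ha).2.2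

lemma key (l : ℝ) (hl : 2 ≤ l) (a b : F2) (ha : a ∈ gens) (hb : b ∈ gens) (hab : b * a ≠ 1)
    (x : Fin 2 → ℝ) (h : nsq x < nsq (act l a x)) :
    nsq (act l a x) < nsq (act l b (act l a x)) := by
  have k1 := key1 l (x 0) (x 1) hl
  have k2 := key1 l (x 1) (x 0) hl
  have k3 := key1 l (x 0) (-x 1) hl
  have k4 := key1 l (x 1) (-x 0) hl
  rcases ha with rfl | rfl | rfl | rfl <;> rcases hb with rfl | rfl | rfl | rfl <;>
    first
    | (exfalso; apply hab; group; done)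
    | (simp only [nsq, act_gh, act_gv, act_ghi, act_gvi, Matrix.cons_val_zero,
        Matrix.cons_val_one] at h ⊢
       first
       | (refine key2 k1 ?_ (fun c1 c2 c3 => ?_) <;> linarith)
       | (refine key2 k2 ?_ (fun c1 c2 c3 => ?_) <;> linarith)
       | (refine key2 k3 ?_ (fun c1 c2 c3 => ?_) <;> linarith)
       | (refine key2 k4 ?_ (fun c1 c2 c3 => ?_) <;> linarith))

lemma nrm_lt (x : Fin 2 → ℝ) (e : ℝ) (he : 0 < e) : nrm x < e ↔ nsq x < e ^ 2 :=
  Real.sqrt_lt' he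

lemma nsq_pos (l : ℝ) (a : F2) (x : Fin 2 → ℝ) (hx : x ∈ Circ) : 0 < nsq (act l a x) := by
  by_contra hc
  have h0 : act l a x = 0 := by
    have := sq_nonneg (act l a x 0)
    have := sq_nonneg (act l a x 1)
    unfold nsq at hc
    ext i
    fin_cases i
    · exact pow_eq_zero_iff two_ne_zero |>.1 (by linarith : act l a x 0 ^ 2 = 0)
    · exact pow_eq_zero_iff two_ne_zero |>.1 (by linarith : act l a x 1 ^ 2 = 0)
  have h1 : x = 0 := by
    rw [← act_one' l x, ← inv_mul_cancel a, act_mul, h0]; simp [act]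
  subst h1
  simp [Circ, nrm] at hx

lemma anti (l : ℝ) (hl : 2 ≤ l) (g : ℕ → F2) (hg : IsGeodesicRay g) (x : Fin 2 → ℝ)
    (hx : x ∈ Circ) (hs : IsShrinkingSeq l g x) (n : ℕ) :
    nsq (act l (g (n + 1)) x) ≤ nsq (act l (g n) x) := by
  by_contra! hc
  obtain ⟨_, hw, hr⟩ := hg
  have hstep : ∀ m, act l (g (m + 1)) x = act l (g (m + 1) * (g m)⁻¹) (act l (g m) x) := by
    intro m; rw [← act_mul]; simp
  have hinc : ∀ m, nsq (act l (g (n + m)) x) < nsq (act l (g (n + m + 1)) x) := by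
    intro m
    induction m with
    | zero => exact hc
    | succ m ih =>
      have := key l hl _ _ (hw (n + m)) (hw (n + m + 1)) (by simpa using hr (n + m))
        (act l (g (n + m)) x) (by rw [← hstep]; exact ih)
      rw [← hstep, ← hstep] at this
      exact this
  have hge : ∀ m, nsq (act l (g n) x) ≤ nsq (act l (g (n + m)) x) := by
    intro m
    induction m with
    | zero => exact le_rfl
    | succ m ih => exact ih.trans (hinc m).le
  obtain ⟨k, hk, hmin⟩ := Finset.exists_min_image (Finset.range (n + 1))
    (fun i => nsq (act l (g i) x)) ⟨0, by simp⟩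
  have hp := nsq_pos l (g k) x hx
  obtain ⟨i, hi⟩ := hs (Real.sqrt (nsq (act l (g k) x))) (Real.sqrt_pos.2 hp)
  rw [nrm_lt _ _ (Real.sqrt_pos.2 hp), Real.sq_sqrt hp.le] at hi
  rcases le_total i n with h | h
  · exact absurd (hmin i (by simp; omega)) (not_le.2 hi)
  · obtain ⟨m, rfl⟩ := Nat.exists_eq_add_of_le h
    have := hmin n (by simp)
    have := hge m
    linarith

lemma nsq_le_one (l : ℝ) (hl : 2 ≤ l) (g : ℕ → F2) (hg : IsGeodesicRay g) (x : Fin 2 → ℝ)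
    (hx : x ∈ Circ) (hs : IsShrinkingSeq l g x) (n : ℕ) : nsq (act l (g n) x) ≤ 1 := by
  induction n with
  | zero =>
    rw [hg.1, act_one']
    exact (Real.sqrt_eq_one.1 hx).le
  | succ n ih => exact (anti l hl g hg x hx hs n).trans ih

lemma act_det (l : ℝ) (a : F2) (x y : Fin 2 → ℝ) :
    act l a x 0 * act l a y 1 - act l a x 1 * act l a y 0 = x 0 * y 1 - x 1 * y 0 := by
  have h := (rho l a).2
  rw [Matrix.det_fin_two] at h
  simp only [act, Matrix.mulVec, dotProduct, Fin.sum_univ_two]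
  linear_combination (x 0 * y 1 - x 1 * y 0) * h

theorem stmt6 (l : ℝ) (hl : 2 ≤ l) (g : ℕ → F2) (hg : IsGeodesicRay g)
    (hex : ∃ x₀ ∈ Circ, IsShrinkingSeq l g x₀) :
    ∃ x ∈ Circ, {y | y ∈ Circ ∧ IsShrinkingSeq l g y} = ({x, -x} : Set (Fin 2 → ℝ)) := by
  obtain ⟨x, hx, hs⟩ := hex
  refine ⟨x, hx, ?_⟩
  have hnn : ∀ z, nrm (-z) = nrm z := by intro z; simp [nrm]
  ext y
  simp only [Set.mem_ofPred_eq, Set.mem_insert_iff, Set.mem_singleton_iff]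
  constructor
  · rintro ⟨hy, ht⟩
    have hx1 : x 0 ^ 2 + x 1 ^ 2 = 1 := Real.sqrt_eq_one.1 hx
    have hy1 : y 0 ^ 2 + y 1 ^ 2 = 1 := Real.sqrt_eq_one.1 hy
    have hD : x 0 * y 1 - x 1 * y 0 = 0 := by
      by_contra hne
      obtain ⟨i, hi⟩ := hs |x 0 * y 1 - x 1 * y 0| (abs_pos.2 hne)
      rw [nrm_lt _ _ (abs_pos.2 hne), sq_abs] at hi
      have h1 := nsq_le_one l hl g hg y hy ht i
      have h2 := act_det l (g i) x y
      have h3 := nsq_pos l (g i) x hx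
      rw [← h2] at hi
      have h4 := mul_le_mul_of_nonneg_left h1 h3.le
      unfold nsq at *
      nlinarith [sq_nonneg (act l (g i) x 0 * act l (g i) y 0 + act l (g i) x 1 * act l (g i) y 1)]
    have hdot : (x 0 * y 0 + x 1 * y 1) ^ 2 = 1 := by
      linear_combination (y 0 ^ 2 + y 1 ^ 2) * hx1 + hy1 - (x 0 * y 1 - x 1 * y 0) * hD
    have e0 : y 0 = (x 0 * y 0 + x 1 * y 1) * x 0 := by
      linear_combination (-y 0) * hx1 - x 1 * hD
    have e1 : y 1 = (x 0 * y 0 + x 1 * y 1) * x 1 := by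
      linear_combination (-y 1) * hx1 + x 0 * hD
    rcases eq_or_eq_neg_of_sq_eq_sq _ 1 (hdot.trans (one_pow 2).symm) with h | h
    · left; rw [h] at e0 e1; ext i; fin_cases i <;> simp <;> linarith
    · right; rw [h] at e0 e1; ext i; fin_cases i <;> simp <;> linarith
  · rintro (rfl | rfl)
    · exact ⟨hx, hs⟩
    · refine ⟨by simpa [Circ, hnn] using hx, fun e he => ?_⟩
      obtain ⟨i, hi⟩ := hs e he
      exact ⟨i, by rw [act_neg, hnn]; exact hi⟩
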